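/- Let γ ∈ {−16, 0}. There exists a constant C > 0 (depending only on γ) such that |G(x,t)| ≤ C (1+|t|)^{−1/2} for all x ∈ ℤ² and all t ∈ ℝ. -/

import Mathlib

open MeasureTheory

/-- `ω(ξ) = sqrt((2 − 2cos ξ₁) + (2 − 2cos ξ₂))`. -/
noncomputable def om (ξ : ℝ × ℝ) : ℝ :=
  Real.sqrt ((2 - 2 * Real.cos ξ.1) + (2 - 2 * Real.cos ξ.2))

/-- The fundamental solution of the discrete fourth-order Schrödinger equation
`i∂ₜu + Δ²u − γΔu = 0` on the lattice `ℤ²`. -/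
noncomputable def G2 (γ : ℝ) (x : ℤ × ℤ) (t : ℝ) : ℂ :=
  ((((2 * Real.pi) ^ 2)⁻¹ : ℝ) : ℂ) *
    ∫ ξ in Set.Icc (-Real.pi) Real.pi ×ˢ Set.Icc (-Real.pi) Real.pi,
      Complex.exp (Complex.I *
        (((x.1 : ℝ) * ξ.1 + (x.2 : ℝ) * ξ.2 + (om ξ ^ 4 + γ * om ξ ^ 2) * t : ℝ) : ℂ))

lemma norm_cexp_I_mul (θ : ℝ) : ‖Complex.exp (Complex.I * (θ : ℂ))‖ = 1 := by
  rw [mul_comm]; exact Complex.norm_exp_ofReal_mul_I θ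

lemma vdc1 (f f' f'' : ℝ → ℝ) (h1 : ∀ x, HasDerivAt f (f' x) x)
    (h2 : ∀ x, HasDerivAt f' (f'' x) x) (hc : Continuous f'') (a b μ : ℝ) (hab : a ≤ b)
    (hμ : 0 < μ) (hl : ∀ x ∈ Set.Icc a b, μ ≤ |f' x|) (hp : ∀ x ∈ Set.Icc a b, 0 ≤ f'' x) :
    ‖∫ x in a..b, Complex.exp (Complex.I * (f x : ℂ))‖ ≤ 4 / μ := by
  have hu : Set.uIcc a b = Set.Icc a b := Set.uIcc_of_le hab
  have hf : Continuous f := continuous_iff_continuousAt.2 fun x => (h1 x).continuousAt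
  have hf' : Continuous f' := continuous_iff_continuousAt.2 fun x => (h2 x).continuousAt
  have hne : ∀ x ∈ Set.Icc a b, f' x ≠ 0 := by
    intro x hx h0
    have := hl x hx
    rw [h0, abs_zero] at this
    linarith
  have hinv : ∀ x ∈ Set.Icc a b, |(f' x)⁻¹| ≤ 1 / μ := by
    intro x hx
    rw [abs_inv, ← one_div]
    exact one_div_le_one_div_of_le hμ (hl x hx)
  have hd : ∀ x ∈ Set.Icc a b, HasDerivAt (fun y => (f' y)⁻¹) (-f'' x / (f' x) ^ 2) x :=
    fun x hx => (h2 x).inv (hne x hx)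
  have hcq : ContinuousOn (fun x => -f'' x / (f' x) ^ 2) (Set.Icc a b) :=
    hc.neg.continuousOn.div (hf'.pow 2).continuousOn (fun x hx => pow_ne_zero 2 (hne x hx))
  have hI : ∫ x in a..b, -f'' x / (f' x) ^ 2 = (f' b)⁻¹ - (f' a)⁻¹ := by
    apply intervalIntegral.integral_eq_sub_of_hasDerivAt
    · rw [hu]; exact hd
    · apply ContinuousOn.intervalIntegrable; rw [hu]; exact hcq
  have hE : Continuous fun x => Complex.exp (Complex.I * (f x : ℂ)) := by fun_prop
  have hdE : ∀ x, HasDerivAt (fun y => Complex.exp (Complex.I * (f y : ℂ)))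
      (Complex.exp (Complex.I * (f x : ℂ)) * (Complex.I * (f' x : ℂ))) x := by
    intro x
    exact (((h1 x).ofReal_comp).const_mul Complex.I).cexp
  have hF : ∀ x ∈ Set.Icc a b, HasDerivAt
      (fun y => -Complex.I * Complex.exp (Complex.I * (f y : ℂ)) * (((f' y)⁻¹ : ℝ) : ℂ))
      (Complex.exp (Complex.I * (f x : ℂ)) +
        (-Complex.I * Complex.exp (Complex.I * (f x : ℂ))) * ((-f'' x / (f' x) ^ 2 : ℝ) : ℂ)) x := by
    intro x hx
    have hmul := ((hdE x).const_mul (-Complex.I)).mul (hd x hx).ofReal_comp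
    refine HasDerivAt.congr_deriv hmul ?_
    have : ((f' x : ℝ) : ℂ) ≠ 0 := by exact_mod_cast hne x hx
    push_cast
    field_simp
    linear_combination (-(f' x : ℂ) ^ 2) * Complex.I_sq
  have hcR : ContinuousOn (fun x => (-Complex.I * Complex.exp (Complex.I * (f x : ℂ))) *
      ((-f'' x / (f' x) ^ 2 : ℝ) : ℂ)) (Set.Icc a b) :=
    (continuous_const.mul hE).continuousOn.mul (Complex.continuous_ofReal.comp_continuousOn hcq)
  have hint2 : IntervalIntegrable (fun x => (-Complex.I * Complex.exp (Complex.I * (f x : ℂ))) *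
      ((-f'' x / (f' x) ^ 2 : ℝ) : ℂ)) volume a b := by
    apply ContinuousOn.intervalIntegrable; rw [hu]; exact hcR
  have hJ := intervalIntegral.integral_eq_sub_of_hasDerivAt (a := a) (b := b)
    (by rw [hu]; exact hF) ((hE.intervalIntegrable a b).add hint2)
  rw [intervalIntegral.integral_add (hE.intervalIntegrable a b) hint2] at hJ
  have hn : ‖∫ x in a..b, (-Complex.I * Complex.exp (Complex.I * (f x : ℂ))) *
      ((-f'' x / (f' x) ^ 2 : ℝ) : ℂ)‖ ≤ 2 / μ := by
    calc _ ≤ ∫ x in a..b, -(-f'' x / (f' x) ^ 2) := by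
          apply intervalIntegral.norm_integral_le_of_norm_le hab
          · refine Filter.Eventually.of_forall fun x hx => ?_
            have hx' := Set.Ioc_subset_Icc_self hx
            rw [norm_mul, norm_mul, norm_cexp_I_mul, norm_neg, Complex.norm_I, Complex.norm_real,
              Real.norm_eq_abs, one_mul, one_mul, abs_of_nonpos]
            apply div_nonpos_of_nonpos_of_nonneg _ (sq_nonneg _)
            linarith [hp x hx']
          · apply ContinuousOn.intervalIntegrable; rw [hu]; exact hcq.neg
      _ = (f' a)⁻¹ - (f' b)⁻¹ := by rw [intervalIntegral.integral_neg, hI]; ring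
      _ ≤ 2 / μ := by
          have e1 := (abs_le.1 (hinv a (Set.left_mem_Icc.2 hab))).2
          have e2 := (abs_le.1 (hinv b (Set.right_mem_Icc.2 hab))).1
          have : 2 / μ = 1 / μ + 1 / μ := by ring
          linarith
  have hbd : ∀ x ∈ Set.Icc a b,
      ‖-Complex.I * Complex.exp (Complex.I * (f x : ℂ)) * (((f' x)⁻¹ : ℝ) : ℂ)‖ ≤ 1 / μ := by
    intro x hx
    rw [norm_mul, norm_mul, norm_cexp_I_mul, norm_neg, Complex.norm_I, Complex.norm_real,
              Real.norm_eq_abs, one_mul, one_mul]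
    exact hinv x hx
  rw [eq_sub_of_add_eq hJ]
  have e1 := hbd a (Set.left_mem_Icc.2 hab)
  have e2 := hbd b (Set.right_mem_Icc.2 hab)
  refine (norm_sub_le _ _).trans ?_
  refine (add_le_add (norm_sub_le _ _) hn).trans ?_
  have : 4 / μ = 1 / μ + 1 / μ + 2 / μ := by ring
  linarith

lemma triv1 (f : ℝ → ℝ) (a b : ℝ) (hab : a ≤ b) :
    ‖∫ x in a..b, Complex.exp (Complex.I * (f x : ℂ))‖ ≤ b - a := by
  have := intervalIntegral.norm_integral_le_of_norm_le_const (a := a) (b := b) (C := 1)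
    (f := fun x => Complex.exp (Complex.I * (f x : ℂ))) (fun x _ => (norm_cexp_I_mul _).le)
  rwa [one_mul, abs_of_nonneg (by linarith)] at this

lemma vdc2 (f f' f'' : ℝ → ℝ) (h1 : ∀ x, HasDerivAt f (f' x) x)
    (h2 : ∀ x, HasDerivAt f' (f'' x) x) (hc : Continuous f'') (a b l : ℝ) (hab : a ≤ b)
    (hl : 0 < l) (hp : ∀ x ∈ Set.Icc a b, l ^ 2 ≤ f'' x) :
    ‖∫ x in a..b, Complex.exp (Complex.I * (f x : ℂ))‖ ≤ 10 / l := by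
  have hf : Continuous f := continuous_iff_continuousAt.2 fun x => (h1 x).continuousAt
  have hf' : Continuous f' := continuous_iff_continuousAt.2 fun x => (h2 x).continuousAt
  have hgrow : ∀ x ∈ Set.Icc a b, ∀ y ∈ Set.Icc a b, x ≤ y → l ^ 2 * (y - x) ≤ f' y - f' x := by
    intro x hx y hy hxy
    refine (convex_Icc a b).mul_sub_le_image_sub_of_le_deriv hf'.continuousOn
      (fun z _ => (h2 z).differentiableAt.differentiableWithinAt) ?_ x hx y hy hxy
    intro z hz
    rw [(h2 z).deriv]
    exact hp z (interior_subset hz)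
  obtain ⟨c, hcm, hcc⟩ : ∃ c ∈ Set.Icc a b, ∀ x ∈ Set.Icc a b, l ^ 2 * |x - c| ≤ |f' x| := by
    have ha := Set.left_mem_Icc.2 hab
    have hb := Set.right_mem_Icc.2 hab
    by_cases h0 : 0 ≤ f' a
    · refine ⟨a, ha, fun x hx => ?_⟩
      rw [abs_of_nonneg (by linarith [hx.1])]
      have := hgrow a ha x hx hx.1
      exact le_trans (by linarith) (le_abs_self _)
    by_cases h0' : f' b ≤ 0
    · refine ⟨b, hb, fun x hx => ?_⟩
      rw [abs_of_nonpos (by linarith [hx.2])]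
      have := hgrow x hx b hb hx.2
      exact le_trans (by linarith) (neg_le_abs _)
    push Not at h0 h0'
    obtain ⟨c, hcm, hc0⟩ := intermediate_value_Icc hab hf'.continuousOn ⟨h0.le, h0'.le⟩
    refine ⟨c, hcm, fun x hx => ?_⟩
    rcases le_total c x with h | h
    · rw [abs_of_nonneg (by linarith)]
      have := hgrow c hcm x hx h
      exact le_trans (by linarith) (le_abs_self _)
    · rw [abs_of_nonpos (by linarith)]
      have := hgrow x hx c hcm h
      exact le_trans (by linarith) (neg_le_abs _)
  have hE : Continuous fun x => Complex.exp (Complex.I * (f x : ℂ)) := by fun_prop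
  have hl2 : 0 < l⁻¹ := by positivity
  set p := max a (c - l⁻¹) with hpdef
  set q := min b (c + l⁻¹) with hqdef
  have hap : a ≤ p := le_max_left _ _
  have hqb : q ≤ b := min_le_left _ _
  have hpc : p ≤ c := max_le hcm.1 (by linarith)
  have hcq : c ≤ q := le_min hcm.2 (by linarith)
  rw [← intervalIntegral.integral_add_adjacent_intervals (hE.intervalIntegrable a p)
    (hE.intervalIntegrable p b), ← intervalIntegral.integral_add_adjacent_intervals
    (hE.intervalIntegrable p q) (hE.intervalIntegrable q b)]
  have hll : l ^ 2 * l⁻¹ = l := by field_simp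
  have hpos : ∀ x ∈ Set.Icc a b, 0 ≤ f'' x := fun x hx => le_trans (by positivity) (hp x hx)
  have b1 : ‖∫ x in a..p, Complex.exp (Complex.I * (f x : ℂ))‖ ≤ 4 / l := by
    rcases le_total a (c - l⁻¹) with h | h
    · have hpe : p = c - l⁻¹ := max_eq_right h
      refine vdc1 f f' f'' h1 h2 hc a p l hap hl ?_ ?_
      · intro x hx
        have hx' : x ∈ Set.Icc a b := ⟨hx.1, by linarith [hx.2]⟩
        refine le_trans ?_ (hcc x hx')
        rw [abs_of_nonpos (by linarith [hx.2])]
        calc l = l ^ 2 * l⁻¹ := hll.symm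
          _ ≤ _ := by gcongr; linarith [hx.2]
      · intro x hx
        exact hpos x ⟨hx.1, by linarith [hx.2]⟩
    · have hpe : p = a := max_eq_left h
      rw [hpe]; simp; positivity
  have b3 : ‖∫ x in q..b, Complex.exp (Complex.I * (f x : ℂ))‖ ≤ 4 / l := by
    rcases le_total (c + l⁻¹) b with h | h
    · have hpe : q = c + l⁻¹ := min_eq_right h
      refine vdc1 f f' f'' h1 h2 hc q b l hqb hl ?_ ?_
      · intro x hx
        have hx' : x ∈ Set.Icc a b := ⟨by linarith [hx.1], hx.2⟩
        refine le_trans ?_ (hcc x hx')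
        rw [abs_of_nonneg (by linarith [hx.1])]
        calc l = l ^ 2 * l⁻¹ := hll.symm
          _ ≤ _ := by gcongr; linarith [hx.1]
      · intro x hx
        exact hpos x ⟨by linarith [hx.1], hx.2⟩
    · have hpe : q = b := min_eq_left h
      rw [hpe]; simp; positivity
  have b2 : ‖∫ x in p..q, Complex.exp (Complex.I * (f x : ℂ))‖ ≤ 2 / l := by
    refine (triv1 f p q (by linarith)).trans ?_
    have e1 : c - l⁻¹ ≤ p := le_max_right _ _
    have e2 : q ≤ c + l⁻¹ := min_le_right _ _
    have : 2 / l = l⁻¹ + l⁻¹ := by field_simp; norm_num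
    linarith
  refine (norm_add_le _ _).trans ?_
  refine (add_le_add b1 ((norm_add_le _ _).trans (add_le_add b2 b3))).trans ?_
  apply le_of_eq; ring

lemma norm_conj_phase (f : ℝ → ℝ) (a b : ℝ) :
    ‖∫ x in a..b, Complex.exp (Complex.I * ((-f x : ℝ) : ℂ))‖ =
      ‖∫ x in a..b, Complex.exp (Complex.I * (f x : ℂ))‖ := by
  have : ∀ x, Complex.exp (Complex.I * ((-f x : ℝ) : ℂ)) =
      (starRingEnd ℂ) (Complex.exp (Complex.I * (f x : ℂ))) := by
    intro x
    rw [← Complex.exp_conj]; simp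
  simp_rw [this]
  rw [intervalIntegral.intervalIntegral_eq_integral_uIoc,
    intervalIntegral.intervalIntegral_eq_integral_uIoc, integral_conj, norm_smul, norm_smul,
    RCLike.norm_conj]

lemma vdc2' (f f' f'' : ℝ → ℝ) (h1 : ∀ x, HasDerivAt f (f' x) x)
    (h2 : ∀ x, HasDerivAt f' (f'' x) x) (hc : Continuous f'') (a b l : ℝ) (hab : a ≤ b)
    (hl : 0 < l) (hp : (∀ x ∈ Set.Icc a b, l ^ 2 ≤ f'' x) ∨ (∀ x ∈ Set.Icc a b, f'' x ≤ -l ^ 2)) :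
    ‖∫ x in a..b, Complex.exp (Complex.I * (f x : ℂ))‖ ≤ 10 / l := by
  rcases hp with hp | hp
  · exact vdc2 f f' f'' h1 h2 hc a b l hab hl hp
  · rw [← norm_conj_phase]
    exact vdc2 (fun x => -f x) (fun x => -f' x) (fun x => -f'' x) (fun x => (h1 x).neg)
      (fun x => (h2 x).neg) hc.neg a b l hab hl (fun x hx => by linarith [hp x hx])

/-- The oscillating integrand. -/
noncomputable def EE (x y t a b : ℝ) : ℂ :=
  Complex.exp (Complex.I * ((x * a + y * b + t * (4 - 2 * Real.cos a - 2 * Real.cos b) ^ 2 : ℝ) : ℂ))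

/-- Second derivative of the phase in the direction `(1, m)`. -/
noncomputable def DD (m a b : ℝ) : ℝ :=
  8 * (Real.sin a + m * Real.sin b) ^ 2 +
    4 * (4 - 2 * Real.cos a - 2 * Real.cos b) * (Real.cos a + m ^ 2 * Real.cos b)

lemma EE_cont (x y t : ℝ) : Continuous fun p : ℝ × ℝ => EE x y t p.1 p.2 := by
  unfold EE; fun_prop

lemma EE_norm (x y t a b : ℝ) : ‖EE x y t a b‖ = 1 := norm_cexp_I_mul _

lemma EE_swap (x y t a b : ℝ) : EE x y t a b = EE y x t b a := by
  unfold EE; congr 3; ring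

lemma line_d1 (x y t m c a : ℝ) : HasDerivAt
    (fun a => x * a + y * (c + m * a) + t * (4 - 2 * Real.cos a - 2 * Real.cos (c + m * a)) ^ 2)
    (x + y * m + t * (4 * (4 - 2 * Real.cos a - 2 * Real.cos (c + m * a)) *
      (Real.sin a + m * Real.sin (c + m * a)))) a := by
  have hl : HasDerivAt (fun a : ℝ => c + m * a) m a := by
    simpa using ((hasDerivAt_id a).const_mul m).const_add c
  have hs := (((Real.hasDerivAt_cos a).const_mul 2).const_sub 4).sub (hl.cos.const_mul 2)
  have := (((hasDerivAt_id a).const_mul x).add (hl.const_mul y)).add ((hs.pow 2).const_mul t)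
  refine HasDerivAt.congr_deriv this ?_
  simp only [Pi.sub_apply, Nat.cast_ofNat]; ring

lemma line_d2 (x y t m c a : ℝ) : HasDerivAt
    (fun a => x + y * m + t * (4 * (4 - 2 * Real.cos a - 2 * Real.cos (c + m * a)) *
      (Real.sin a + m * Real.sin (c + m * a)))) (t * DD m a (c + m * a)) a := by
  have hl : HasDerivAt (fun a : ℝ => c + m * a) m a := by
    simpa using ((hasDerivAt_id a).const_mul m).const_add c
  have hs := (((Real.hasDerivAt_cos a).const_mul 2).const_sub 4).sub (hl.cos.const_mul 2)
  have hq := (Real.hasDerivAt_sin a).add (hl.sin.const_mul m)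
  have := (((hs.const_mul 4).mul hq).const_mul t).const_add (x + y * m)
  refine HasDerivAt.congr_deriv this ?_
  simp only [Pi.sub_apply, Pi.add_apply, DD]; ring

lemma line_c (t m c : ℝ) : Continuous fun a => t * DD m a (c + m * a) := by
  unfold DD; fun_prop

lemma shear (f : ℝ × ℝ → ℂ) (hf : Continuous f) (m a1 a2 b1 b2 : ℝ) (ha : a1 ≤ a2)
    (hb : b1 ≤ b2) : ∫ a in a1..a2, ∫ b in b1..b2, f (a, b) =
      ∫ c, ∫ a, (Set.Icc a1 a2 ×ˢ Set.Icc b1 b2).indicator f (a, c + m * a) := by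
  set Q := Set.Icc a1 a2 ×ˢ Set.Icc b1 b2 with hQ
  have hQc : IsCompact Q := isCompact_Icc.prod isCompact_Icc
  have e1 : ∫ a in a1..a2, ∫ b in b1..b2, f (a, b) = ∫ a, ∫ b, Q.indicator f (a, b) := by
    rw [intervalIntegral.integral_of_le ha, ← integral_Icc_eq_integral_Ioc,
      ← integral_indicator measurableSet_Icc]
    congr 1; ext a
    by_cases haa : a ∈ Set.Icc a1 a2
    · rw [Set.indicator_of_mem haa, intervalIntegral.integral_of_le hb,
        ← integral_Icc_eq_integral_Ioc, ← integral_indicator measurableSet_Icc]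
      congr 1; ext b
      by_cases hbb : b ∈ Set.Icc b1 b2
      · rw [Set.indicator_of_mem hbb, Set.indicator_of_mem (Set.mk_mem_prod haa hbb)]
      · rw [Set.indicator_of_notMem hbb, Set.indicator_of_notMem (fun h => hbb h.2)]
    · rw [Set.indicator_of_notMem haa]
      symm
      rw [integral_eq_zero_of_ae]
      refine Filter.Eventually.of_forall fun b => ?_
      simp only [Pi.zero_apply]
      rw [Set.indicator_of_notMem (fun h => haa h.1)]
  have e2 : ∀ a, ∫ b, Q.indicator f (a, b) = ∫ c, Q.indicator f (a, c + m * a) := fun a =>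
    (integral_add_right_eq_self (fun b => Q.indicator f (a, b)) (m * a)).symm
  rw [e1]
  simp_rw [e2]
  apply integral_integral_swap
  set R := (fun p : ℝ × ℝ => (p.1, p.2 - m * p.1)) '' Q with hR
  have hRc : IsCompact R := hQc.image (by fun_prop)
  have heq : (Function.uncurry fun a c => Q.indicator f (a, c + m * a)) =
      R.indicator (fun p => f (p.1, p.2 + m * p.1)) := by
    ext ⟨a, c⟩
    have hiff : (a, c + m * a) ∈ Q ↔ (a, c) ∈ R := by
      constructor
      · intro h
        exact ⟨_, h, by simp⟩
      · rintro ⟨⟨a', b'⟩, h, he⟩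
        simp only [Prod.mk.injEq] at he
        obtain ⟨rfl, rfl⟩ := he
        simpa using h
    by_cases h : (a, c) ∈ R
    · simp only [Function.uncurry]
      rw [Set.indicator_of_mem (hiff.2 h), Set.indicator_of_mem h]
    · simp only [Function.uncurry]
      rw [Set.indicator_of_notMem (fun h' => h (hiff.1 h')), Set.indicator_of_notMem h]
  rw [heq, integrable_indicator_iff hRc.measurableSet]
  exact ContinuousOn.integrableOn_compact hRc (by fun_prop)

/-- The local estimate at a point. -/
def Loc (p : ℝ × ℝ) (K : ℝ) : Prop :=
  ∀ a1 a2 b1 b2 : ℝ, a1 ≤ a2 → b1 ≤ b2 → 0 ≤ a1 → a2 ≤ Real.pi → 0 ≤ b1 → b2 ≤ Real.pi →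
    Set.Icc a1 a2 ×ˢ Set.Icc b1 b2 ⊆ Metric.ball p (1 / K) → ∀ x y t : ℝ, 0 < t →
    ‖∫ a in a1..a2, ∫ b in b1..b2, EE x y t a b‖ ≤ K / √t

lemma loc_nondeg (m : ℝ) (hm : |m| ≤ 1) (p : ℝ × ℝ) (h : DD m p.1 p.2 ≠ 0) :
    ∃ K > 0, Loc p K := by
  have hcont : Continuous fun p : ℝ × ℝ => DD m p.1 p.2 := by unfold DD; fun_prop
  set d := |DD m p.1 p.2| / 2 with hd
  have hd0 : 0 < d := by have := abs_pos.2 h; positivity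
  obtain ⟨ε, hε, hb⟩ := Metric.continuousAt_iff.1 (hcont.continuousAt (x := p)) d hd0
  have hsd : 0 < √d := Real.sqrt_pos.2 hd0
  have hsign : (∀ q ∈ Metric.ball p ε, d ≤ DD m q.1 q.2) ∨
      (∀ q ∈ Metric.ball p ε, DD m q.1 q.2 ≤ -d) := by
    rcases lt_or_gt_of_ne h with h' | h'
    · right
      intro q hq
      have := hb hq
      rw [Real.dist_eq, abs_lt] at this
      rw [abs_of_neg h'] at hd
      linarith
    · left
      intro q hq
      have := hb hq
      rw [Real.dist_eq, abs_lt] at this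
      rw [abs_of_pos h'] at hd
      linarith
  set L := 2 * Real.pi with hL
  have hpi := Real.pi_pos
  refine ⟨max (1 / ε) (2 * L * (10 / √d)), lt_max_of_lt_left (by positivity), ?_⟩
  intro a1 a2 b1 b2 ha hb' ha1 ha2 hb1 hb2 hsub x y t ht
  have hst : 0 < √t := Real.sqrt_pos.2 ht
  have hsub' : Set.Icc a1 a2 ×ˢ Set.Icc b1 b2 ⊆ Metric.ball p ε := by
    refine hsub.trans (Metric.ball_subset_ball ?_)
    rw [one_div_le (lt_max_of_lt_left (by positivity)) hε]
    exact le_max_left _ _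
  rw [shear (fun p => EE x y t p.1 p.2) (EE_cont x y t) m a1 a2 b1 b2 ha hb']
  have key : ∀ c, ‖∫ a, (Set.Icc a1 a2 ×ˢ Set.Icc b1 b2).indicator
      (fun p => EE x y t p.1 p.2) (a, c + m * a)‖ ≤
      (Set.Icc (-L) L).indicator (fun _ => 10 / (√d * √t)) c := by
    intro c
    set S := Set.Icc a1 a2 ∩ (fun a => c + m * a) ⁻¹' Set.Icc b1 b2 with hS
    have hSc : IsCompact S :=
      isCompact_Icc.inter_right (isClosed_Icc.preimage (by fun_prop))
    have hconv : S.OrdConnected := by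
      constructor
      rintro u ⟨hu1, hu2⟩ v ⟨hv1, hv2⟩ w ⟨hw1, hw2⟩
      refine ⟨⟨hu1.1.trans hw1, hw2.trans hv1.2⟩, ?_⟩
      simp only [Set.mem_preimage, Set.mem_Icc] at *
      rcases le_total 0 m with h0 | h0
      · constructor <;> nlinarith
      · constructor <;> nlinarith
    have hfe : (fun a => (Set.Icc a1 a2 ×ˢ Set.Icc b1 b2).indicator
      (fun p => EE x y t p.1 p.2) (a, c + m * a)) = S.indicator (fun a => EE x y t a (c + m * a)) := by
      ext a
      by_cases hh : a ∈ S
      · have hh2 : c + m * a ∈ Set.Icc b1 b2 := hh.2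
        rw [Set.indicator_of_mem hh, Set.indicator_of_mem (Set.mk_mem_prod hh.1 hh2)]
      · rw [Set.indicator_of_notMem hh, Set.indicator_of_notMem (fun h' => hh ⟨h'.1, h'.2⟩)]
    rw [hfe, integral_indicator hSc.measurableSet]
    have hnn : 0 ≤ (Set.Icc (-L) L).indicator (fun _ => 10 / (√d * √t)) c :=
      Set.indicator_nonneg (fun _ _ => by positivity) c
    rcases S.eq_empty_or_nonempty with hE | hne
    · rw [hE]; simpa using hnn
    · obtain ⟨u, hu1, hu2⟩ := id hne
      have hcL : c ∈ Set.Icc (-L) L := by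
        simp only [Set.mem_preimage, Set.mem_Icc] at *
        have h1 : |m * u| ≤ Real.pi := by
          rw [abs_mul, abs_of_nonneg (by linarith : 0 ≤ u)]
          nlinarith [abs_nonneg m]
        rw [abs_le] at h1
        constructor <;> linarith
      rw [Set.indicator_of_mem hcL]
      have hSI : S = Set.Icc (sInf S) (sSup S) :=
        eq_Icc_of_connected_compact ⟨hne, hconv.isPreconnected⟩ hSc
      have hle : sInf S ≤ sSup S := by
        rw [hSI, Set.nonempty_Icc] at hne; exact hne
      rw [hSI, integral_Icc_eq_integral_Ioc, ← intervalIntegral.integral_of_le hle]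
      refine vdc2' _ _ _ (line_d1 x y t m c) (line_d2 x y t m c) (line_c t m c) _ _ _ hle
        (mul_pos hsd hst) ?_
      have hsq : (√d * √t) ^ 2 = t * d := by
        rw [mul_pow, Real.sq_sqrt hd0.le, Real.sq_sqrt ht.le, mul_comm]
      rw [hsq, ← hSI]
      rcases hsign with hs | hs
      · left
        intro a has
        have := hs (a, c + m * a) (hsub' (Set.mk_mem_prod has.1 has.2))
        exact mul_le_mul_of_nonneg_left this ht.le
      · right
        intro a has
        have := hs (a, c + m * a) (hsub' (Set.mk_mem_prod has.1 has.2))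
        nlinarith
  refine (norm_integral_le_of_norm_le ?_ (Filter.Eventually.of_forall key)).trans ?_
  · rw [integrable_indicator_iff measurableSet_Icc]
    exact ContinuousOn.integrableOn_compact isCompact_Icc continuousOn_const
  · rw [integral_indicator measurableSet_Icc, setIntegral_const]
    simp only [Measure.real, Real.volume_Icc, smul_eq_mul]
    rw [ENNReal.toReal_ofReal (by linarith)]
    calc (L - -L) * (10 / (√d * √t)) = (2 * L * (10 / √d)) / √t := by field_simp; ring
      _ ≤ _ := by gcongr; exact le_max_right _ _

lemma exists_dir (a b : ℝ) (ha : 0 ≤ a) (ha' : a ≤ Real.pi) (hb : 0 ≤ b) (hb' : b ≤ Real.pi)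
    (hne : (a, b) ≠ (0, 0)) : ∃ m : ℝ, |m| ≤ 1 ∧ DD m a b ≠ 0 := by
  by_contra! hcon
  have h0 := hcon 0 (by simp)
  have h1 := hcon 1 (by simp)
  have h2 := hcon (-1) (by simp)
  unfold DD at h0 h1 h2
  have e1 := Real.sin_sq_add_cos_sq a
  have e2 := Real.sin_sq_add_cos_sq b
  have hmix : Real.sin a * Real.sin b = 0 := by nlinarith
  have hs : 4 - 2 * Real.cos a - 2 * Real.cos b = 0 := by
    rcases mul_eq_zero.1 hmix with hz | hz
    · have hc : Real.cos a ≠ 0 := by intro h; rw [h, hz] at e1; norm_num at e1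
      rw [hz] at h0
      have : (4 - 2 * Real.cos a - 2 * Real.cos b) * Real.cos a = 0 := by linarith
      exact (mul_eq_zero.1 this).resolve_right hc
    · have hc : Real.cos b ≠ 0 := by intro h; rw [h, hz] at e2; norm_num at e2
      rw [hz] at h0 h1
      have : (4 - 2 * Real.cos a - 2 * Real.cos b) * Real.cos b = 0 := by linarith
      exact (mul_eq_zero.1 this).resolve_right hc
  have hca : Real.cos a = 1 := by linarith [Real.cos_le_one a, Real.cos_le_one b]
  have hcb : Real.cos b = 1 := by linarith [Real.cos_le_one a, Real.cos_le_one b]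
  have hpi := Real.pi_pos
  apply hne
  rw [(Real.cos_eq_one_iff_of_lt_of_lt (by linarith) (by linarith)).1 hca,
    (Real.cos_eq_one_iff_of_lt_of_lt (by linarith) (by linarith)).1 hcb]

lemma exists_rho (x t : ℝ) (ht : 0 < t) : ∃ ρ > 0, 1 ≤ √t * ρ ^ 2 ∧ |x| ≤ t * ρ ^ 3 ∧
    (√t * ρ ^ 2 = 1 ∨ |x| = t * ρ ^ 3) := by
  have hst : 0 < √t := Real.sqrt_pos.2 ht
  set u := √((√t)⁻¹) with hu
  have hu0 : 0 < u := Real.sqrt_pos.2 (by positivity)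
  have hu2 : √t * u ^ 2 = 1 := by
    rw [hu, Real.sq_sqrt (by positivity)]; field_simp
  set v := (|x| / t) ^ (1 / 3 : ℝ) with hv
  have hv0 : 0 ≤ v := by positivity
  have hv3 : t * v ^ 3 = |x| := by
    rw [hv, ← Real.rpow_natCast, ← Real.rpow_mul (by positivity)]
    norm_num
    field_simp
  rcases le_total u v with h | h
  · refine ⟨v, hu0.trans_le h, ?_, hv3.ge, Or.inr hv3.symm⟩
    rw [← hu2]; gcongr
  · refine ⟨u, hu0, hu2.ge, ?_, Or.inl hu2⟩
    rw [← hv3]; gcongr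

lemma origin1d (x t : ℝ) (ht : 0 < t) : ∃ ρ > 0, ∀ y b l r : ℝ, 0 ≤ b → b ≤ l → l ≤ r →
    r ≤ Real.pi / 2 → ‖∫ a in l..r, EE x y t a b‖ ≤ 200 / √t * (ρ / (ρ ^ 2 + b ^ 2)) := by
  obtain ⟨ρ, hρ, h1, h2, h3⟩ := exists_rho x t ht
  refine ⟨ρ, hρ, fun y b l r hb hbl hlr hr => ?_⟩
  have hpi := Real.pi_pos
  have hpi4 := Real.pi_le_four
  set τ := √t with hτ
  have hτ0 : 0 < τ := Real.sqrt_pos.2 ht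
  have htτ : t = τ ^ 2 := (Real.sq_sqrt ht.le).symm
  -- the phase and its derivatives on the slice
  have hd1 : ∀ a, HasDerivAt (fun a => x * a + y * b + t * (4 - 2 * Real.cos a - 2 * Real.cos b) ^ 2)
      (x + t * (4 * (4 - 2 * Real.cos a - 2 * Real.cos b) * Real.sin a)) a := by
    intro a; simpa using line_d1 x y t 0 b a
  have hd2 : ∀ a, HasDerivAt
      (fun a => x + t * (4 * (4 - 2 * Real.cos a - 2 * Real.cos b) * Real.sin a))
      (t * DD 0 a b) a := by
    intro a; simpa using line_d2 x y t 0 b a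
  have hdc : Continuous fun a => t * DD 0 a b := by simpa using line_c t 0 b
  have hsin : ∀ a, 0 ≤ a → a ≤ Real.pi / 2 → a / 2 ≤ Real.sin a := by
    intro a h0 h1
    have := Real.mul_le_sin h0 h1
    refine le_trans ?_ this
    rw [div_mul_eq_mul_div, le_div_iff₀ hpi]
    nlinarith
  have hsl : ∀ a, 0 ≤ a → a ≤ Real.pi / 2 → a ^ 2 / 4 ≤ 2 - 2 * Real.cos a := by
    intro a h0 h1
    have := hsin (a / 2) (by linarith) (by linarith)
    have h2 : Real.cos a = 1 - 2 * Real.sin (a / 2) ^ 2 := by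
      have h3 := Real.cos_two_mul (a / 2)
      have h4 := Real.sin_sq_add_cos_sq (a / 2)
      rw [show 2 * (a / 2) = a by ring] at h3
      linarith
    rw [h2]
    nlinarith
  have hsu : ∀ a : ℝ, 2 - 2 * Real.cos a ≤ a ^ 2 := by
    intro a
    have := Real.one_sub_sq_div_two_le_cos (x := a)
    linarith
  have hDD : ∀ a, 0 ≤ a → a ≤ Real.pi / 2 → a ^ 2 ≤ DD 0 a b := by
    intro a h0 h1
    have e1 := hsin a h0 h1
    have e2 : 0 ≤ Real.cos a := Real.cos_nonneg_of_mem_Icc ⟨by linarith, h1⟩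
    have e3 := Real.cos_le_one a
    have e4 := Real.cos_le_one b
    unfold DD
    have : 0 ≤ 4 * (4 - 2 * Real.cos a - 2 * Real.cos b) * Real.cos a :=
      mul_nonneg (by linarith) e2
    nlinarith
  have hlow : ∀ a, 0 ≤ a → a ≤ Real.pi / 2 →
      a ^ 3 / 2 ≤ 4 * (4 - 2 * Real.cos a - 2 * Real.cos b) * Real.sin a := by
    intro a h0 h1
    have e1 := hsin a h0 h1
    have e2 := hsl a h0 h1
    have e4 := Real.cos_le_one b
    calc a ^ 3 / 2 = (4 * (a ^ 2 / 4)) * (a / 2) := by ring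
      _ ≤ _ := by
        have e5 := sq_nonneg a
        apply mul_le_mul (by linarith) e1 (by linarith) (by linarith)
  have hupp : ∀ a, b ≤ a → a ≤ Real.pi / 2 →
      4 * (4 - 2 * Real.cos a - 2 * Real.cos b) * Real.sin a ≤ 8 * a ^ 3 := by
    intro a h0 h1
    have h00 : 0 ≤ a := hb.trans h0
    have e1 := Real.sin_le h00
    have e2 := hsu a
    have e3 := hsu b
    have e5 := Real.cos_le_one a
    have e4 := Real.cos_le_one b
    have e6 : b ^ 2 ≤ a ^ 2 := by gcongr
    calc _ ≤ (4 * (2 * a ^ 2)) * a := by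
          apply mul_le_mul (by linarith) e1 (Real.sin_nonneg_of_nonneg_of_le_pi h00 (by linarith))
          positivity
      _ = _ := by ring
  have hDp : ∀ a ∈ Set.Icc l r, 0 ≤ t * DD 0 a b := fun a ha => by
    have := hDD a (by linarith [ha.1]) (by linarith [ha.2])
    have : 0 ≤ DD 0 a b := le_trans (sq_nonneg a) this
    positivity
  rcases le_total (2 * ρ) b with hc | hc
  · -- non-stationary case
    have hb0 : 0 < b := by linarith
    have : ‖∫ a in l..r, EE x y t a b‖ ≤ 4 / (t * b ^ 3 / 4) := by
      refine vdc1 _ _ _ hd1 hd2 hdc l r _ hlr (by positivity) ?_ hDp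
      intro a ha
      have e1 := hlow a (by linarith [ha.1]) (by linarith [ha.2])
      have hba : b ≤ a := by linarith [ha.1]
      have e2 : b ^ 3 ≤ a ^ 3 := by gcongr
      have e3 : (2 * ρ) ^ 3 ≤ b ^ 3 := by gcongr
      have e4 := (abs_le.1 h2).1
      refine le_trans ?_ (le_abs_self _)
      have e5 : t * (a ^ 3 / 2) ≤ t * (4 * (4 - 2 * Real.cos a - 2 * Real.cos b) * Real.sin a) := by
        gcongr
      have e6 : t * b ^ 3 ≤ t * a ^ 3 := by gcongr
      have e7 : t * (2 * ρ) ^ 3 ≤ t * b ^ 3 := by gcongr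
      have e8 : t * (2 * ρ) ^ 3 = 8 * (t * ρ ^ 3) := by ring
      have e9 : 0 < t * b ^ 3 := by positivity
      linarith
    refine this.trans ?_
    rw [htτ, div_mul_div_comm, div_le_div_iff₀ (by positivity) (by positivity)]
    have e1 : ρ ^ 2 + b ^ 2 ≤ 2 * b ^ 2 := by nlinarith
    have e2 : τ * b ^ 2 ≤ τ * b ^ 2 * (τ * ρ ^ 2) := le_mul_of_one_le_right (by positivity) h1
    have e3 : ρ * (τ ^ 2 * b ^ 2 * ρ) ≤ b * (τ ^ 2 * b ^ 2 * ρ) := by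
      gcongr; linarith
    calc 4 * (τ * (ρ ^ 2 + b ^ 2)) ≤ 4 * (τ * (2 * b ^ 2)) := by gcongr
      _ = 8 * (τ * b ^ 2) := by ring
      _ ≤ 8 * (τ * b ^ 2 * (τ * ρ ^ 2)) := by linarith
      _ = 8 * (ρ * (τ ^ 2 * b ^ 2 * ρ)) := by ring
      _ ≤ 8 * (b * (τ ^ 2 * b ^ 2 * ρ)) := by linarith
      _ ≤ 50 * (b * (τ ^ 2 * b ^ 2 * ρ)) := by gcongr; norm_num
      _ = _ := by ring
  · -- near the stationary scale
    have main : ‖∫ a in l..r, EE x y t a b‖ ≤ 38 / (τ * ρ) := by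
      have hE : Continuous fun a => EE x y t a b := by unfold EE; fun_prop
      set p := max l (min r (ρ / 3)) with hp
      have hlp : l ≤ p := le_max_left _ _
      have hpr : p ≤ r := max_le hlr (min_le_left _ _)
      rw [← intervalIntegral.integral_add_adjacent_intervals (hE.intervalIntegrable l p)
        (hE.intervalIntegrable p r)]
      have b1 : ‖∫ a in l..p, EE x y t a b‖ ≤ 8 / (τ * ρ) := by
        rcases le_total (ρ / 3) l with hl3 | hl3
        · have : p = l := max_eq_left ((min_le_right _ _).trans hl3)
          rw [this]; simp; positivity
        have hp3 : p ≤ ρ / 3 := max_le hl3 (min_le_right _ _)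
        rcases h3 with h3 | h3
        · refine (triv1 _ l p hlp).trans ?_
          rw [le_div_iff₀ (by positivity)]
          have : p - l ≤ ρ / 3 := by linarith
          calc (p - l) * (τ * ρ) ≤ ρ / 3 * (τ * ρ) := by gcongr
            _ = (τ * ρ ^ 2) / 3 := by ring
            _ ≤ 8 := by rw [h3]; norm_num
        · have : ‖∫ a in l..p, EE x y t a b‖ ≤ 4 / (t * ρ ^ 3 / 2) := by
            refine vdc1 _ _ _ hd1 hd2 hdc l p _ hlp (by positivity) ?_
              (fun a ha => hDp a ⟨ha.1, ha.2.trans hpr⟩)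
            intro a ha
            have ha0 : 0 ≤ a := by linarith [ha.1]
            have har : a ≤ Real.pi / 2 := by linarith [ha.2]
            have e1 := hlow a ha0 har
            have e2 := hupp a (by linarith [ha.1]) har
            have e3 : a ^ 3 ≤ (ρ / 3) ^ 3 := by gcongr; linarith [ha.2]
            have e4 : 4 * (4 - 2 * Real.cos a - 2 * Real.cos b) * Real.sin a ≤ ρ ^ 3 / 2 := by
              have : (ρ / 3) ^ 3 = ρ ^ 3 / 27 := by ring
              have : 0 < ρ ^ 3 := by positivity
              linarith
            have e5 : 0 ≤ 4 * (4 - 2 * Real.cos a - 2 * Real.cos b) * Real.sin a :=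
              le_trans (by positivity) e1
            have e6 : |t * (4 * (4 - 2 * Real.cos a - 2 * Real.cos b) * Real.sin a)| ≤
                t * (ρ ^ 3 / 2) := by
              rw [abs_of_nonneg (by positivity)]; gcongr
            have e7 := abs_sub_abs_le_abs_sub x
              (-(t * (4 * (4 - 2 * Real.cos a - 2 * Real.cos b) * Real.sin a)))
            rw [abs_neg, sub_neg_eq_add] at e7
            linarith
          refine this.trans ?_
          rw [htτ, div_le_div_iff₀ (by positivity) (by positivity)]
          calc 4 * (τ * ρ) = 4 * (τ * ρ) * 1 := by ring
            _ ≤ 4 * (τ * ρ) * (τ * ρ ^ 2) := by gcongr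
            _ = _ := by ring
      have b2 : ‖∫ a in p..r, EE x y t a b‖ ≤ 30 / (τ * ρ) := by
        rcases le_total r (ρ / 3) with hr3 | hr3
        · have : p = r := by rw [hp, min_eq_left hr3, max_eq_right hlr]
          rw [this]; simp; positivity
        have hp3 : ρ / 3 ≤ p := by rw [hp, min_eq_right hr3]; exact le_max_right _ _
        have : ‖∫ a in p..r, EE x y t a b‖ ≤ 10 / (τ * (ρ / 3)) := by
          refine vdc2 _ _ _ hd1 hd2 hdc p r _ hpr (by positivity) ?_
          intro a ha
          have e1 := hDD a (by linarith [ha.1]) (by linarith [ha.2])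
          have e2 : (ρ / 3) ^ 2 ≤ a ^ 2 := by gcongr; linarith [ha.1]
          rw [mul_pow, ← htτ]
          gcongr; linarith
        refine this.trans (le_of_eq ?_)
        field_simp; norm_num
      refine (norm_add_le _ _).trans ((add_le_add b1 b2).trans (le_of_eq ?_))
      ring
    refine main.trans ?_
    rw [div_mul_div_comm, div_le_div_iff₀ (by positivity) (by positivity)]
    have e1 : ρ ^ 2 + b ^ 2 ≤ 5 * ρ ^ 2 := by nlinarith
    calc 38 * (τ * (ρ ^ 2 + b ^ 2)) ≤ 38 * (τ * (5 * ρ ^ 2)) := by gcongr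
      _ = 190 * (τ * ρ ^ 2) := by ring
      _ ≤ 200 * (τ * ρ ^ 2) := by gcongr; norm_num
      _ = _ := by ring

lemma int_poisson (ρ : ℝ) (hρ : 0 < ρ) (b1 b2 : ℝ) :
    ∫ b in b1..b2, ρ / (ρ ^ 2 + b ^ 2) ≤ Real.pi := by
  have hd : ∀ b, HasDerivAt (fun b => Real.arctan (b / ρ)) (ρ / (ρ ^ 2 + b ^ 2)) b := by
    intro b
    have := ((hasDerivAt_id b).div_const ρ).arctan
    refine HasDerivAt.congr_deriv this ?_
    simp only [id]
    field_simp
  have hc : Continuous fun b => ρ / (ρ ^ 2 + b ^ 2) :=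
    continuous_const.div (by fun_prop) (fun b => by positivity)
  rw [intervalIntegral.integral_eq_sub_of_hasDerivAt (fun b _ => hd b) (hc.intervalIntegrable _ _)]
  linarith [Real.arctan_lt_pi_div_two (b2 / ρ), Real.neg_pi_div_two_lt_arctan (b1 / ρ)]

lemma origin_half (T : Set (ℝ × ℝ)) (hT : T = {p | p.2 < p.1} ∨ T = {p | p.2 ≤ p.1})
    (a1 a2 b1 b2 : ℝ) (hb : b1 ≤ b2) (hb1 : 0 ≤ b1)
    (ha2 : a2 ≤ Real.pi / 2) (x y t : ℝ) (ht : 0 < t) :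
    ‖∫ p in (Set.Ioc a1 a2 ×ˢ Set.Ioc b1 b2) ∩ T, EE x y t p.1 p.2‖ ≤ 200 * Real.pi / √t := by
  obtain ⟨ρ, hρ, h⟩ := origin1d x t ht
  have hTm : MeasurableSet T := by
    rcases hT with rfl | rfl
    · exact measurableSet_lt measurable_snd measurable_fst
    · exact measurableSet_le measurable_snd measurable_fst
  have hSm : MeasurableSet ((Set.Ioc a1 a2 ×ˢ Set.Ioc b1 b2) ∩ T) :=
    (measurableSet_Ioc.prod measurableSet_Ioc).inter hTm
  have hst : 0 < √t := Real.sqrt_pos.2 ht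
  have hint : IntegrableOn (fun p : ℝ × ℝ => EE x y t p.1 p.2)
      ((Set.Ioc a1 a2 ×ˢ Set.Ioc b1 b2) ∩ T) := by
    refine IntegrableOn.mono_set (t := Set.Icc a1 a2 ×ˢ Set.Icc b1 b2) ?_ ?_
    · exact ContinuousOn.integrableOn_compact (isCompact_Icc.prod isCompact_Icc)
        (EE_cont x y t).continuousOn
    · exact Set.inter_subset_left.trans
        (Set.prod_mono Set.Ioc_subset_Icc_self Set.Ioc_subset_Icc_self)
  rw [← integral_indicator hSm, Measure.volume_eq_prod, integral_prod_symm]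
  swap
  · rw [← Measure.volume_eq_prod, integrable_indicator_iff hSm]; exact hint
  have hc : Continuous fun b => 200 / √t * (ρ / (ρ ^ 2 + b ^ 2)) :=
    continuous_const.mul (continuous_const.div (by fun_prop) (fun b => by positivity))
  have key : ∀ b, ‖∫ a, ((Set.Ioc a1 a2 ×ˢ Set.Ioc b1 b2) ∩ T).indicator
      (fun p => EE x y t p.1 p.2) (a, b)‖ ≤
      (Set.Ioc b1 b2).indicator (fun b => 200 / √t * (ρ / (ρ ^ 2 + b ^ 2))) b := by
    intro b
    by_cases hbb : b ∈ Set.Ioc b1 b2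
    swap
    · rw [Set.indicator_of_notMem hbb]
      have : ∀ a, ((Set.Ioc a1 a2 ×ˢ Set.Ioc b1 b2) ∩ T).indicator
          (fun p => EE x y t p.1 p.2) (a, b) = 0 := fun a =>
        Set.indicator_of_notMem (fun h => hbb h.1.2) _
      simp [this]
    rw [Set.indicator_of_mem hbb]
    have hslice : ∫ a, ((Set.Ioc a1 a2 ×ˢ Set.Ioc b1 b2) ∩ T).indicator
        (fun p => EE x y t p.1 p.2) (a, b) = ∫ a in Set.Ioc (max a1 b) a2, EE x y t a b := by
      rw [← Set.Ioc_inter_Ioi]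
      rcases hT with rfl | rfl
      · rw [← integral_indicator (measurableSet_Ioc.inter measurableSet_Ioi)]
        congr 1; ext a
        simp only [Set.indicator_apply, Set.mem_inter_iff, Set.mem_prod, Set.mem_ofPred_eq,
          Set.mem_Ioi, hbb, and_true]
      · have : (Set.Ioc a1 a2 ∩ Set.Ioi b : Set ℝ) =ᵐ[volume] (Set.Ioc a1 a2 ∩ Set.Ici b : Set ℝ) :=
          ae_eq_set_inter (Filter.EventuallyEq.refl _ _) Ioi_ae_eq_Ici
        rw [setIntegral_congr_set this,
          ← integral_indicator (measurableSet_Ioc.inter measurableSet_Ici)]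
        congr 1; ext a
        simp only [Set.indicator_apply, Set.mem_inter_iff, Set.mem_prod, Set.mem_ofPred_eq,
          Set.mem_Ici, hbb, and_true]
    rw [hslice]
    rcases le_total (max a1 b) a2 with hle | hle
    · rw [← intervalIntegral.integral_of_le hle]
      exact h y b _ _ (by linarith [hbb.1]) (le_max_right _ _) hle ha2
    · rw [Set.Ioc_eq_empty (not_lt.2 hle)]
      simp; positivity
  refine (norm_integral_le_of_norm_le ?_ (Filter.Eventually.of_forall key)).trans ?_
  · rw [integrable_indicator_iff measurableSet_Ioc]
    exact (hc.integrableOn_Icc).mono_set Set.Ioc_subset_Icc_self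
  · rw [integral_indicator measurableSet_Ioc, ← intervalIntegral.integral_of_le hb,
      intervalIntegral.integral_const_mul]
    calc _ ≤ 200 / √t * Real.pi := by gcongr; exact int_poisson ρ hρ b1 b2
      _ = _ := by ring

lemma loc_origin : ∃ K > 0, Loc (0, 0) K := by
  have hpi := Real.pi_pos
  have hpi3 := Real.pi_gt_three
  refine ⟨400 * Real.pi, by positivity, ?_⟩
  intro a1 a2 b1 b2 ha hb ha1 ha2 hb1 hb2 hsub x y t ht
  have hcor := hsub (Set.mk_mem_prod (Set.right_mem_Icc.2 ha) (Set.right_mem_Icc.2 hb))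
  have h1 : 1 / (400 * Real.pi) ≤ Real.pi / 2 := by
    rw [div_le_div_iff₀ (by positivity) (by norm_num)]; nlinarith
  rw [Metric.mem_ball, Prod.dist_eq, max_lt_iff, Real.dist_eq, Real.dist_eq, sub_zero, sub_zero,
    abs_lt, abs_lt] at hcor
  have ha2' : a2 ≤ Real.pi / 2 := by linarith [hcor.1.2]
  have hb2' : b2 ≤ Real.pi / 2 := by linarith [hcor.2.2]
  have hint : IntegrableOn (fun p : ℝ × ℝ => EE x y t p.1 p.2)
      (Set.Ioc a1 a2 ×ˢ Set.Ioc b1 b2) := by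
    refine IntegrableOn.mono_set (t := Set.Icc a1 a2 ×ˢ Set.Icc b1 b2) ?_
      (Set.prod_mono Set.Ioc_subset_Icc_self Set.Ioc_subset_Icc_self)
    exact ContinuousOn.integrableOn_compact (isCompact_Icc.prod isCompact_Icc)
        (EE_cont x y t).continuousOn
  have e0 : ∫ a in a1..a2, ∫ b in b1..b2, EE x y t a b =
      ∫ p in Set.Ioc a1 a2 ×ˢ Set.Ioc b1 b2, EE x y t p.1 p.2 := by
    rw [Measure.volume_eq_prod, setIntegral_prod _ (by rw [← Measure.volume_eq_prod]; exact hint),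
      intervalIntegral.integral_of_le ha]
    simp_rw [intervalIntegral.integral_of_le hb]
  have hTm : MeasurableSet {p : ℝ × ℝ | p.2 < p.1} :=
    measurableSet_lt measurable_snd measurable_fst
  rw [e0, ← integral_inter_add_sdiff hTm hint]
  have b1' := origin_half _ (Or.inl rfl) a1 a2 b1 b2 hb hb1 ha2' x y t ht
  have b2' := origin_half _ (Or.inr rfl) b1 b2 a1 a2 ha ha1 hb2' y x t ht
  have e1 : ∫ p in (Set.Ioc b1 b2 ×ˢ Set.Ioc a1 a2) ∩ {p | p.2 ≤ p.1}, EE y x t p.1 p.2 =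
      ∫ p in (Set.Ioc a1 a2 ×ˢ Set.Ioc b1 b2) \ {p | p.2 < p.1}, EE x y t p.1 p.2 := by
    have hmp : MeasurePreserving (Prod.swap : ℝ × ℝ → ℝ × ℝ) volume volume :=
      Measure.measurePreserving_swap
    rw [← hmp.setIntegral_preimage_emb MeasurableEquiv.prodComm.measurableEmbedding]
    have : Prod.swap ⁻¹' ((Set.Ioc b1 b2 ×ˢ Set.Ioc a1 a2) ∩ {p : ℝ × ℝ | p.2 ≤ p.1}) =
        (Set.Ioc a1 a2 ×ˢ Set.Ioc b1 b2) \ {p | p.2 < p.1} := by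
      ext ⟨a, b⟩
      simp only [Set.mem_preimage, Prod.swap_prod_mk, Set.mem_inter_iff, Set.mem_prod,
        Set.mem_ofPred_eq, Set.mem_sdiff, not_lt]
      tauto
    rw [this]
    congr 1; ext p
    rw [EE_swap]; rfl
  rw [e1] at b2'
  refine (norm_add_le _ _).trans ((add_le_add b1' b2').trans (le_of_eq ?_))
  ring

lemma loc_mono {p : ℝ × ℝ} {K K' : ℝ} (hK : 0 < K) (h : K ≤ K') (hl : Loc p K) : Loc p K' := by
  intro a1 a2 b1 b2 ha hb ha1 ha2 hb1 hb2 hsub x y t ht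
  refine (hl a1 a2 b1 b2 ha hb ha1 ha2 hb1 hb2 (hsub.trans (Metric.ball_subset_ball ?_))
    x y t ht).trans ?_
  · exact one_div_le_one_div_of_le hK h
  · gcongr

lemma loc_near {p q : ℝ × ℝ} {K : ℝ} (hK : 0 < K) (hl : Loc p K)
    (hq : q ∈ Metric.ball p (1 / (2 * K))) : Loc q (2 * K) := by
  intro a1 a2 b1 b2 ha hb ha1 ha2 hb1 hb2 hsub x y t ht
  refine (hl a1 a2 b1 b2 ha hb ha1 ha2 hb1 hb2 (hsub.trans (Metric.ball_subset_ball' ?_))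
    x y t ht).trans ?_
  · rw [Metric.mem_ball] at hq
    have : 1 / K = 1 / (2 * K) + 1 / (2 * K) := by field_simp; norm_num
    linarith
  · gcongr; linarith

lemma loc_all : ∃ K > 0, ∀ p ∈ Set.Icc (0 : ℝ) Real.pi ×ˢ Set.Icc (0 : ℝ) Real.pi, Loc p K := by
  have hc : IsCompact (Set.Icc (0 : ℝ) Real.pi ×ˢ Set.Icc (0 : ℝ) Real.pi) :=
    isCompact_Icc.prod isCompact_Icc
  refine hc.induction_on (p := fun S => ∃ K > 0, ∀ p ∈ S, Loc p K) ?_ ?_ ?_ ?_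
  · exact ⟨1, one_pos, fun p hp => hp.elim⟩
  · rintro s t hst ⟨K, hK, h⟩
    exact ⟨K, hK, fun p hp => h p (hst hp)⟩
  · rintro s t ⟨K, hK, h⟩ ⟨K', hK', h'⟩
    refine ⟨max K K', lt_max_of_lt_left hK, ?_⟩
    rintro p (hp | hp)
    · exact loc_mono hK (le_max_left _ _) (h p hp)
    · exact loc_mono hK' (le_max_right _ _) (h' p hp)
  · rintro ⟨a, b⟩ ⟨ha, hb⟩
    have hex : ∃ K > 0, Loc (a, b) K := by
      by_cases h0 : (a, b) = (0, 0)
      · rw [h0]; exact loc_origin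
      · obtain ⟨m, hm, hD⟩ := exists_dir a b ha.1 ha.2 hb.1 hb.2 h0
        exact loc_nondeg m hm (a, b) hD
    obtain ⟨K, hK, hl⟩ := hex
    exact ⟨Metric.ball (a, b) (1 / (2 * K)),
      mem_nhdsWithin_of_mem_nhds (Metric.ball_mem_nhds _ (by positivity)), 2 * K, by positivity,
      fun q hq => loc_near hK hl hq⟩

lemma EE_inner_cont (x y t b1 b2 : ℝ) : Continuous fun a => ∫ b in b1..b2, EE x y t a b :=
  intervalIntegral.continuous_parametric_intervalIntegral_of_continuous'
    (f := fun a b => EE x y t a b) (EE_cont x y t) b1 b2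

lemma bisect (K : ℝ) (hK : 0 < K)
    (h : ∀ p ∈ Set.Icc (0 : ℝ) Real.pi ×ˢ Set.Icc (0 : ℝ) Real.pi, Loc p K) (n : ℕ) :
    ∀ a1 a2 b1 b2 : ℝ, a1 ≤ a2 → b1 ≤ b2 → 0 ≤ a1 → a2 ≤ Real.pi → 0 ≤ b1 → b2 ≤ Real.pi →
    a2 - a1 < 2 ^ n * (1 / K) → b2 - b1 < 2 ^ n * (1 / K) → ∀ x y t : ℝ, 0 < t →
    ‖∫ a in a1..a2, ∫ b in b1..b2, EE x y t a b‖ ≤ 4 ^ n * (K / √t) := by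
  induction n with
  | zero =>
    intro a1 a2 b1 b2 ha hb ha1 ha2 hb1 hb2 h1 h2 x y t ht
    rw [pow_zero, one_mul] at *
    refine h (a1, b1) ⟨⟨ha1, ha.trans ha2⟩, ⟨hb1, hb.trans hb2⟩⟩ a1 a2 b1 b2 ha hb ha1 ha2 hb1 hb2
      ?_ x y t ht
    rintro ⟨u, v⟩ ⟨hu, hv⟩
    rw [Metric.mem_ball, Prod.dist_eq, max_lt_iff, Real.dist_eq, Real.dist_eq, abs_lt, abs_lt]
    simp only [Set.mem_Icc] at hu hv
    have : 0 < 1 / K := by positivity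
    refine ⟨⟨?_, ?_⟩, ⟨?_, ?_⟩⟩ <;> simp only <;> linarith
  | succ n ih =>
    intro a1 a2 b1 b2 ha hb ha1 ha2 hb1 hb2 h1 h2 x y t ht
    have hE : ∀ a, Continuous fun b => EE x y t a b := fun a => by unfold EE; fun_prop
    have hsplitb : ∀ a, ∫ b in b1..b2, EE x y t a b =
        (∫ b in b1..((b1 + b2) / 2), EE x y t a b) + ∫ b in ((b1 + b2) / 2)..b2, EE x y t a b :=
      fun a => (intervalIntegral.integral_add_adjacent_intervals
        ((hE a).intervalIntegrable _ _) ((hE a).intervalIntegrable _ _)).symm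
    simp_rw [hsplitb]
    rw [intervalIntegral.integral_add ((EE_inner_cont x y t _ _).intervalIntegrable _ _)
      ((EE_inner_cont x y t _ _).intervalIntegrable _ _),
      ← intervalIntegral.integral_add_adjacent_intervals (b := (a1 + a2) / 2)
        ((EE_inner_cont x y t b1 ((b1 + b2) / 2)).intervalIntegrable _ _)
        ((EE_inner_cont x y t _ _).intervalIntegrable _ _),
      ← intervalIntegral.integral_add_adjacent_intervals (b := (a1 + a2) / 2)
        ((EE_inner_cont x y t ((b1 + b2) / 2) b2).intervalIntegrable _ _)
        ((EE_inner_cont x y t _ _).intervalIntegrable _ _)]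
    rw [pow_succ] at h1 h2
    have q1 := ih a1 ((a1 + a2) / 2) b1 ((b1 + b2) / 2) (by linarith) (by linarith) (by linarith)
      (by linarith) (by linarith) (by linarith) (by linarith) (by linarith) x y t ht
    have q2 := ih ((a1 + a2) / 2) a2 b1 ((b1 + b2) / 2) (by linarith) (by linarith) (by linarith)
      (by linarith) (by linarith) (by linarith) (by linarith) (by linarith) x y t ht
    have q3 := ih a1 ((a1 + a2) / 2) ((b1 + b2) / 2) b2 (by linarith) (by linarith) (by linarith)
      (by linarith) (by linarith) (by linarith) (by linarith) (by linarith) x y t ht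
    have q4 := ih ((a1 + a2) / 2) a2 ((b1 + b2) / 2) b2 (by linarith) (by linarith) (by linarith)
      (by linarith) (by linarith) (by linarith) (by linarith) (by linarith) x y t ht
    refine (norm_add_le _ _).trans ((add_le_add ((norm_add_le _ _).trans (add_le_add q1 q2))
      ((norm_add_le _ _).trans (add_le_add q3 q4))).trans (le_of_eq ?_))
    ring

lemma core_pos : ∃ C > 0, ∀ x y t : ℝ, 0 < t →
    ‖∫ a in (0 : ℝ)..Real.pi, ∫ b in (0 : ℝ)..Real.pi, EE x y t a b‖ ≤ C / √t := by
  obtain ⟨K, hK, h⟩ := loc_all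
  have hpi := Real.pi_pos
  obtain ⟨n, hn⟩ := pow_unbounded_of_one_lt (Real.pi * K) (one_lt_two (α := ℝ))
  refine ⟨4 ^ n * K, by positivity, fun x y t ht => ?_⟩
  have hlt : Real.pi - 0 < 2 ^ n * (1 / K) := by
    rw [sub_zero, mul_one_div, lt_div_iff₀ hK]; exact hn
  have := bisect K hK h n 0 Real.pi 0 Real.pi hpi.le hpi.le le_rfl le_rfl le_rfl le_rfl hlt hlt
    x y t ht
  rwa [← mul_div_assoc] at this

lemma EE_conj (x y t a b : ℝ) : EE x y t a b = (starRingEnd ℂ) (EE (-x) (-y) (-t) a b) := by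
  unfold EE
  rw [← Complex.exp_conj, map_mul, Complex.conj_I, Complex.conj_ofReal]
  congr 1
  push_cast
  ring

lemma core : ∃ C > 0, ∀ x y t : ℝ, t ≠ 0 →
    ‖∫ a in (0 : ℝ)..Real.pi, ∫ b in (0 : ℝ)..Real.pi, EE x y t a b‖ ≤ C / √|t| := by
  obtain ⟨C, hC, h⟩ := core_pos
  refine ⟨C, hC, fun x y t ht => ?_⟩
  rcases lt_or_gt_of_ne ht with h0 | h0
  · have e := h (-x) (-y) (-t) (by linarith)
    rw [abs_of_neg h0]
    refine le_trans (le_of_eq ?_) e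
    have hpi := Real.pi_pos.le
    simp_rw [EE_conj x y t, intervalIntegral.integral_of_le hpi, integral_conj, RCLike.norm_conj]
  · rw [abs_of_pos h0]; exact h x y t h0

/-- The integrand of the fundamental solution. -/
noncomputable def Eg (γ x y t a b : ℝ) : ℂ :=
  Complex.exp (Complex.I * ((x * a + y * b + ((4 - 2 * Real.cos a - 2 * Real.cos b) ^ 2 +
    γ * (4 - 2 * Real.cos a - 2 * Real.cos b)) * t : ℝ) : ℂ))

lemma Eg_cont (γ x y t : ℝ) : Continuous fun p : ℝ × ℝ => Eg γ x y t p.1 p.2 := by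
  unfold Eg; fun_prop

lemma Eg_quad (γ : ℝ) (hγ : γ = -16 ∨ γ = 0) : ∃ C > 0, ∀ x y t : ℝ, t ≠ 0 →
    ‖∫ a in (0 : ℝ)..Real.pi, ∫ b in (0 : ℝ)..Real.pi, Eg γ x y t a b‖ ≤ C / √|t| := by
  obtain ⟨C, hC, h⟩ := core
  refine ⟨C, hC, fun x y t ht => ?_⟩
  rcases hγ with rfl | rfl
  · have e : ∀ a b, Eg (-16) x y t (Real.pi - a) (Real.pi - b) =
        Complex.exp (Complex.I * ((x * Real.pi + y * Real.pi - 64 * t : ℝ) : ℂ)) *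
          EE (-x) (-y) t a b := by
      intro a b
      unfold Eg EE
      rw [← Complex.exp_add, Real.cos_pi_sub, Real.cos_pi_sub]
      congr 1
      push_cast
      ring
    have e2 : ∫ a in (0 : ℝ)..Real.pi, ∫ b in (0 : ℝ)..Real.pi, Eg (-16) x y t a b =
        ∫ a in (0 : ℝ)..Real.pi, ∫ b in (0 : ℝ)..Real.pi,
          Eg (-16) x y t (Real.pi - a) (Real.pi - b) := by
      have i1 : ∀ a, ∫ b in (0 : ℝ)..Real.pi, Eg (-16) x y t a (Real.pi - b) =
          ∫ b in (0 : ℝ)..Real.pi, Eg (-16) x y t a b := by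
        intro a
        rw [intervalIntegral.integral_comp_sub_left (fun b => Eg (-16) x y t a b) Real.pi]
        simp
      simp_rw [i1]
      rw [intervalIntegral.integral_comp_sub_left
        (fun a => ∫ b in (0 : ℝ)..Real.pi, Eg (-16) x y t a b) Real.pi]
      simp
    rw [e2]
    simp_rw [e, intervalIntegral.integral_const_mul]
    rw [norm_mul, norm_cexp_I_mul, one_mul]
    exact h _ _ t ht
  · have : ∀ a b, Eg 0 x y t a b = EE x y t a b := by
      intro a b; unfold Eg EE; congr 3; ring
    simp_rw [this]
    exact h x y t ht

lemma fold1 (f : ℝ → ℂ) (hf : Continuous f) : ∫ a in (-Real.pi)..Real.pi, f a =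
    (∫ a in (0 : ℝ)..Real.pi, f (-a)) + ∫ a in (0 : ℝ)..Real.pi, f a := by
  rw [← intervalIntegral.integral_add_adjacent_intervals (b := 0) (hf.intervalIntegrable _ _)
    (hf.intervalIntegrable _ _), intervalIntegral.integral_comp_neg]
  simp

lemma Eg_full (γ : ℝ) (hγ : γ = -16 ∨ γ = 0) : ∃ C > 0, ∀ x y t : ℝ, t ≠ 0 →
    ‖∫ a in (-Real.pi)..Real.pi, ∫ b in (-Real.pi)..Real.pi, Eg γ x y t a b‖ ≤ C / √|t| := by
  obtain ⟨C, hC, h⟩ := Eg_quad γ hγ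
  refine ⟨4 * C, by positivity, fun x y t ht => ?_⟩
  have hci : ∀ x y, Continuous fun a => ∫ b in (0 : ℝ)..Real.pi, Eg γ x y t a b := fun x y =>
    intervalIntegral.continuous_parametric_intervalIntegral_of_continuous'
      (f := fun a b => Eg γ x y t a b) (Eg_cont γ x y t) 0 Real.pi
  have hcb : ∀ x y a, Continuous fun b => Eg γ x y t a b := fun x y a => by unfold Eg; fun_prop
  have n1 : ∀ x y a b, Eg γ x y t (-a) b = Eg γ (-x) y t a b := by
    intro x y a b; unfold Eg; rw [Real.cos_neg]; congr 3; ring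
  have n2 : ∀ x y a b, Eg γ x y t a (-b) = Eg γ x (-y) t a b := by
    intro x y a b; unfold Eg; rw [Real.cos_neg]; congr 3; ring
  have f1 : ∀ a, ∫ b in (-Real.pi)..Real.pi, Eg γ x y t a b =
      (∫ b in (0 : ℝ)..Real.pi, Eg γ x (-y) t a b) + ∫ b in (0 : ℝ)..Real.pi, Eg γ x y t a b := by
    intro a
    rw [fold1 _ (hcb x y a)]
    simp_rw [n2]
  simp_rw [f1]
  rw [intervalIntegral.integral_add ((hci x (-y)).intervalIntegrable _ _)
    ((hci x y).intervalIntegrable _ _), fold1 _ (hci x (-y)), fold1 _ (hci x y)]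
  simp_rw [n1]
  refine (norm_add_le _ _).trans ((add_le_add
    ((norm_add_le _ _).trans (add_le_add (h _ _ t ht) (h _ _ t ht)))
    ((norm_add_le _ _).trans (add_le_add (h _ _ t ht) (h _ _ t ht)))).trans (le_of_eq ?_))
  ring

lemma G2_eq (γ : ℝ) (x : ℤ × ℤ) (t : ℝ) : G2 γ x t = ((((2 * Real.pi) ^ 2)⁻¹ : ℝ) : ℂ) *
    ∫ a in (-Real.pi)..Real.pi, ∫ b in (-Real.pi)..Real.pi, Eg γ x.1 x.2 t a b := by
  have hpi : -Real.pi ≤ Real.pi := by linarith [Real.pi_pos]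
  unfold G2
  congr 1
  have e : ∀ ξ : ℝ × ℝ, Complex.exp (Complex.I *
        (((x.1 : ℝ) * ξ.1 + (x.2 : ℝ) * ξ.2 + (om ξ ^ 4 + γ * om ξ ^ 2) * t : ℝ) : ℂ)) =
        Eg γ x.1 x.2 t ξ.1 ξ.2 := by
    intro ξ
    have hs : om ξ ^ 2 = 4 - 2 * Real.cos ξ.1 - 2 * Real.cos ξ.2 := by
      unfold om
      rw [Real.sq_sqrt (by linarith [Real.cos_le_one ξ.1, Real.cos_le_one ξ.2])]
      ring
    have h4 : om ξ ^ 4 = (om ξ ^ 2) ^ 2 := by ring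
    rw [h4, hs]; rfl
  simp_rw [e]
  rw [Measure.volume_eq_prod, setIntegral_prod, intervalIntegral.integral_of_le hpi,
    ← integral_Icc_eq_integral_Ioc]
  · simp_rw [intervalIntegral.integral_of_le hpi, ← integral_Icc_eq_integral_Ioc]
  · rw [← Measure.volume_eq_prod]
    exact ContinuousOn.integrableOn_compact (isCompact_Icc.prod isCompact_Icc)
      (Eg_cont γ x.1 x.2 t).continuousOn

lemma Eg_triv (γ x y t : ℝ) :
    ‖∫ a in (-Real.pi)..Real.pi, ∫ b in (-Real.pi)..Real.pi, Eg γ x y t a b‖ ≤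
      (2 * Real.pi) ^ 2 := by
  have hpi := Real.pi_pos
  have h1 : ∀ a, ‖∫ b in (-Real.pi)..Real.pi, Eg γ x y t a b‖ ≤ 2 * Real.pi := by
    intro a
    refine (triv1 _ _ _ (by linarith)).trans (by linarith)
  refine (intervalIntegral.norm_integral_le_of_norm_le_const (fun a _ => h1 a)).trans ?_
  rw [abs_of_pos (by linarith)]
  apply le_of_eq; ring

/-- For `γ ∈ {−16, 0}` the fundamental solution on `ℤ²` decays like `(1+|t|)^{-1/2}`. -/
theorem stmt3 (γ : ℝ) (hγ : γ = -16 ∨ γ = 0) :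
    ∃ C > (0 : ℝ), ∀ (x : ℤ × ℤ) (t : ℝ),
      ‖G2 γ x t‖ ≤ C * (1 + |t|) ^ (-(1 / 2 : ℝ)) := by
  obtain ⟨C, hC, h⟩ := Eg_full γ hγ
  have hpi := Real.pi_pos
  have hpi3 := Real.pi_gt_three
  refine ⟨2 * C + 2, by positivity, fun x t => ?_⟩
  have hA : 0 < ((2 * Real.pi) ^ 2)⁻¹ := by positivity
  have hA1 : ((2 * Real.pi) ^ 2)⁻¹ ≤ 1 := inv_le_one_of_one_le₀ (by nlinarith)
  rw [G2_eq, norm_mul, Complex.norm_real, Real.norm_eq_abs, abs_of_pos hA,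
    Real.rpow_neg (by positivity), ← Real.sqrt_eq_rpow, ← div_eq_mul_inv]
  have hs : 0 < √(1 + |t|) := Real.sqrt_pos.2 (by positivity)
  rcases le_total |t| 1 with h1 | h1
  · have hs2 : √(1 + |t|) ≤ 2 := by
      rw [Real.sqrt_le_left (by norm_num)]; linarith
    calc _ ≤ ((2 * Real.pi) ^ 2)⁻¹ * (2 * Real.pi) ^ 2 := by gcongr; exact Eg_triv _ _ _ _
      _ = 1 := inv_mul_cancel₀ (by positivity)
      _ ≤ _ := by rw [le_div_iff₀ hs]; linarith
  · have ht : t ≠ 0 := by rintro rfl; simp at h1; linarith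
    have hst : 0 < √|t| := Real.sqrt_pos.2 (by positivity)
    have hs2 : √(1 + |t|) ≤ 2 * √|t| := by
      rw [Real.sqrt_le_left (by positivity), mul_pow, Real.sq_sqrt (abs_nonneg t)]; linarith
    calc _ ≤ 1 * (C / √|t|) := by gcongr; exact h _ _ t ht
      _ = C / √|t| := one_mul _
      _ ≤ _ := by
        rw [div_le_div_iff₀ hst hs]
        nlinarith
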